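/- Let V be a simple Euclidean Jordan algebra of rank r ≥ 3 with cone of squares Q. Then there is no hyperplane H through the origin in V such that the orthogonal projection P_H maps Q into Q. Equivalently, V contains no lattice-like hyperplane. -/

import Mathlib

open scoped RealInnerProductSpace

/-- A Euclidean Jordan algebra structure on a real inner product space `V`:
a commutative bilinear product satisfying the Jordan identity, for which the
inner product is associative, together with a unit element. -/
structure EJA (V : Type*) [NormedAddCommGroup V] [InnerProductSpace ℝ V] where
  mul : V →ₗ[ℝ] V →ₗ[ℝ] V
  comm : ∀ x y : V, mul x y = mul y x
  jordan : ∀ x y : V, mul x (mul (mul x x) y) = mul (mul x x) (mul x y)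
  assoc_inner : ∀ x y z : V, ⟪mul x y, z⟫ = ⟪y, mul x z⟫
  one : V
  one_mul : ∀ x : V, mul one x = x

variable {V : Type*} [NormedAddCommGroup V] [InnerProductSpace ℝ V]

/-- The cone of squares of a Euclidean Jordan algebra. -/
def EJA.coneOfSquares (J : EJA V) : Set V := {x | ∃ y, x = J.mul y y}

/-- An idempotent element. -/
def EJA.IsIdem (J : EJA V) (c : V) : Prop := J.mul c c = c

/-- A primitive idempotent: a nonzero idempotent which is not the sum of two
nonzero orthogonal idempotents. -/
def EJA.IsPrimitiveIdem (J : EJA V) (c : V) : Prop :=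
  J.IsIdem c ∧ c ≠ 0 ∧
    ∀ u v : V, J.IsIdem u → J.IsIdem v → J.mul u v = 0 → c = u + v → u = 0 ∨ v = 0

/-- A Jordan frame: a complete system of mutually orthogonal primitive
idempotents summing to the unit. -/
def EJA.IsJordanFrame (J : EJA V) {r : ℕ} (c : Fin r → V) : Prop :=
  (∀ i, J.IsPrimitiveIdem (c i)) ∧
    (∀ i j, i ≠ j → J.mul (c i) (c j) = 0) ∧ (∑ i, c i) = J.one

/-- An ideal of a Euclidean Jordan algebra. -/
def EJA.IsIdeal (J : EJA V) (I : Submodule ℝ V) : Prop :=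
  ∀ x ∈ I, ∀ y : V, J.mul x y ∈ I

/-- A simple Euclidean Jordan algebra: nontrivial and with no nontrivial ideal. -/
def EJA.IsSimple (J : EJA V) : Prop :=
  (⊤ : Submodule ℝ V) ≠ ⊥ ∧ ∀ I : Submodule ℝ V, J.IsIdeal I → I = ⊥ ∨ I = ⊤

/-!
If the projection along `a` preserves the self-dual cone, then `φ = ⟪a, ·⟫` satisfies
`φ e * φ f ≤ 0` for all orthogonal idempotents `e` and `f`. Three nonzero reals cannot have pairwise
negative products, so `φ` vanishes on some member of a Jordan frame of rank at least three.

If `Vᵢⱼ ≠ 0`, it contains a square root `v` of `cᵢ + cⱼ`, and every `w = C (cᵢ - cⱼ) + S v` with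
`C² + S² = 1` is one too. Choosing `w` with `φ w = 0`, the orthogonal idempotents
`(cᵢ + cⱼ ± w) / 2` give `φ (cᵢ + cⱼ)² ≤ 0`. Simplicity means that the nonzero `Vᵢⱼ` connect the
frame, hence `φ` vanishes on all of it.

The condition on `φ` is invariant under automorphisms. Rotating the frame by Peirce reflections
therefore shows that `φ` kills each `Vᵢⱼ` as well. As `V₁(cᵢ) = ℝ cᵢ`, which follows by maximizing
the cubic form `⟪x², x⟫` on the unit sphere of `V₁(cᵢ)`, the Peirce decomposition gives `φ = 0`.
-/

namespace EJA

variable {J : EJA V} {c d e f g u v w x y : V}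

theorem IsIdem.eq (he : J.IsIdem e) : J.mul e e = e := he

theorem inner_mul_left (J : EJA V) (x y z : V) : ⟪J.mul x y, z⟫ = ⟪x, J.mul y z⟫ := by
  rw [J.comm, J.assoc_inner]

theorem jordan_linearized (J : EJA V) (x y z : V) :
    J.mul z (J.mul (J.mul x x) y) + (2 : ℝ) • J.mul x (J.mul (J.mul x z) y) =
      J.mul (J.mul x x) (J.mul z y) + (2 : ℝ) • J.mul (J.mul x z) (J.mul x y) := by
  have h_add := J.jordan (x + z) y
  have h_sub := J.jordan (x - z) y
  have hz := J.jordan z y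
  simp only [map_add, map_sub, LinearMap.add_apply, LinearMap.sub_apply, J.comm z x] at h_add h_sub
  linear_combination (norm := module) (1 / 2 : ℝ) • h_add - (1 / 2 : ℝ) • h_sub - hz

/-- The roots of `2 X³ - 3 X² + X` are the Peirce eigenvalues `0`, `1 / 2` and `1`. -/
theorem IsIdem.peirce_polynomial (he : J.IsIdem e) (x : V) :
    (2 : ℝ) • J.mul e (J.mul e (J.mul e x)) + J.mul e x = (3 : ℝ) • J.mul e (J.mul e x) := by
  have h := J.jordan_linearized e e x
  simp only [he.eq, J.comm x e, J.comm (J.mul e x) e] at h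
  linear_combination (norm := module) h

section PeirceSpaces

/-- The Peirce space `V_μ(e)`: the eigenspace of multiplication by `e` for the eigenvalue `μ`. -/
def peirceSpace (J : EJA V) (e : V) (μ : ℝ) : Submodule ℝ V :=
  Module.End.eigenspace (J.mul e) μ

/-- The even part `V₀(e) ⊕ V₁(e)` of the Peirce decomposition of an idempotent `e`, encoded as the
set of `x` with `e (e x) = e x`. -/
def peirceEven (J : EJA V) (e : V) : Submodule ℝ V :=
  LinearMap.eqLocus (J.mul e ∘ₗ J.mul e) (J.mul e)

theorem mem_peirceSpace {μ : ℝ} : x ∈ J.peirceSpace e μ ↔ J.mul e x = μ • x :=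
  Module.End.mem_eigenspace_iff

theorem mem_peirceSpace_one : x ∈ J.peirceSpace e 1 ↔ J.mul e x = x := by
  rw [mem_peirceSpace, one_smul]

theorem mem_peirceSpace_zero : x ∈ J.peirceSpace e 0 ↔ J.mul e x = 0 := by
  rw [mem_peirceSpace, zero_smul]

theorem mem_peirceEven : x ∈ J.peirceEven e ↔ J.mul e (J.mul e x) = J.mul e x := Iff.rfl

theorem peirceSpace_one_le_peirceEven : J.peirceSpace e 1 ≤ J.peirceEven e := fun x hx => by
  rw [mem_peirceSpace_one] at hx
  rw [mem_peirceEven, hx, hx]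

theorem peirceSpace_zero_le_peirceEven : J.peirceSpace e 0 ≤ J.peirceEven e := fun x hx => by
  rw [mem_peirceSpace_zero] at hx
  rw [mem_peirceEven, hx, map_zero]

theorem mul_mem_peirceSpace_one_of_mem_peirceEven (hx : x ∈ J.peirceEven e) :
    J.mul e x ∈ J.peirceSpace e 1 :=
  mem_peirceSpace_one.mpr hx

namespace IsIdem

theorem two_smul_mul_mul_sub_mem_peirceSpace_one (he : J.IsIdem e) (x : V) :
    (2 : ℝ) • J.mul e (J.mul e x) - J.mul e x ∈ J.peirceSpace e 1 := by
  rw [mem_peirceSpace_one, map_sub, map_smul]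
  linear_combination (norm := module) he.peirce_polynomial x

theorem mul_left_comm_of_mem_peirceEven (he : J.IsIdem e) (hx : x ∈ J.peirceEven e) (y : V) :
    J.mul e (J.mul x y) = J.mul x (J.mul e y) := by
  have h_lin := J.jordan_linearized e y x
  have h_lin_mul := J.jordan_linearized e y (J.mul e x)
  simp only [he.eq, mem_peirceEven.mp hx] at h_lin h_lin_mul
  linear_combination (norm := module) (2 : ℝ) • h_lin_mul - h_lin

theorem mul_mem_peirceEven (he : J.IsIdem e) (hx : x ∈ J.peirceEven e)
    (hy : y ∈ J.peirceEven e) : J.mul x y ∈ J.peirceEven e := by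
  rw [mem_peirceEven, he.mul_left_comm_of_mem_peirceEven hx,
    he.mul_left_comm_of_mem_peirceEven hx, mem_peirceEven.mp hy]

theorem mul_mem_peirceSpace (he : J.IsIdem e) {μ : ℝ} (hx : x ∈ J.peirceEven e)
    (hy : y ∈ J.peirceSpace e μ) : J.mul x y ∈ J.peirceSpace e μ := by
  rw [mem_peirceSpace] at hy ⊢
  rw [he.mul_left_comm_of_mem_peirceEven hx, hy, map_smul]

theorem mul_self_mem_peirceEven_of_mem_half (he : J.IsIdem e)
    (hx : x ∈ J.peirceSpace e (1 / 2)) : J.mul x x ∈ J.peirceEven e := by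
  have h := J.jordan_linearized x e e
  rw [mem_peirceSpace] at hx
  simp only [he.eq, J.comm x e, hx, map_smul, LinearMap.smul_apply, J.comm (J.mul x x) e] at h
  rw [mem_peirceEven]
  linear_combination (norm := module) h

theorem mul_mem_peirceEven_of_mem_half (he : J.IsIdem e) (hx : x ∈ J.peirceSpace e (1 / 2))
    (hy : y ∈ J.peirceSpace e (1 / 2)) : J.mul x y ∈ J.peirceEven e := by
  have polarization :
      J.mul x y = (1 / 2 : ℝ) • (J.mul (x + y) (x + y) - J.mul x x - J.mul y y) := by
    simp only [map_add, LinearMap.add_apply, J.comm y x]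
    module
  rw [polarization]
  exact Submodule.smul_mem _ _ <| sub_mem (sub_mem
    (he.mul_self_mem_peirceEven_of_mem_half (add_mem hx hy))
    (he.mul_self_mem_peirceEven_of_mem_half hx)) (he.mul_self_mem_peirceEven_of_mem_half hy)

theorem mul_eq_zero_of_mem_one_of_mem_zero (he : J.IsIdem e) (hx : x ∈ J.peirceSpace e 1)
    (hy : y ∈ J.peirceSpace e 0) : J.mul x y = 0 := by
  have h_zero := he.mul_mem_peirceSpace (peirceSpace_one_le_peirceEven hx) hy
  have h_one := he.mul_mem_peirceSpace (peirceSpace_zero_le_peirceEven hy) hx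
  rw [J.comm, mem_peirceSpace_one] at h_one
  rw [mem_peirceSpace_zero] at h_zero
  exact h_one.symm.trans h_zero

end IsIdem

end PeirceSpaces

section PeirceReflection

/-- The projection onto the Peirce space `V_{1/2}(e)` of an idempotent `e`, written as the
polynomial `4 (X - X²)` in multiplication by `e`. -/
def peirceHalf (J : EJA V) (e : V) : V →ₗ[ℝ] V := (4 : ℝ) • (J.mul e - J.mul e ∘ₗ J.mul e)

/-- The Peirce reflection of an idempotent `e`: the identity on `V₀(e) ⊕ V₁(e)` and `-1` on
`V_{1/2}(e)`. -/
def peirceReflection (J : EJA V) (e : V) : V →ₗ[ℝ] V := LinearMap.id - (2 : ℝ) • J.peirceHalf e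

theorem peirceHalf_apply (J : EJA V) (e x : V) :
    J.peirceHalf e x = (4 : ℝ) • (J.mul e x - J.mul e (J.mul e x)) := rfl

theorem peirceReflection_apply (J : EJA V) (e x : V) :
    J.peirceReflection e x = x - (2 : ℝ) • J.peirceHalf e x := rfl

theorem peirceHalf_of_mem_peirceEven (hx : x ∈ J.peirceEven e) : J.peirceHalf e x = 0 := by
  rw [peirceHalf_apply, mem_peirceEven.mp hx, sub_self, smul_zero]

theorem peirceHalf_of_mem_half (hx : x ∈ J.peirceSpace e (1 / 2)) : J.peirceHalf e x = x := by
  rw [mem_peirceSpace] at hx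
  rw [peirceHalf_apply, hx, map_smul, hx]
  module

theorem peirceReflection_of_mem_peirceEven (hx : x ∈ J.peirceEven e) :
    J.peirceReflection e x = x := by
  rw [peirceReflection_apply, peirceHalf_of_mem_peirceEven hx, smul_zero, sub_zero]

theorem peirceReflection_of_mem_half (hx : x ∈ J.peirceSpace e (1 / 2)) :
    J.peirceReflection e x = -x := by
  rw [peirceReflection_apply, peirceHalf_of_mem_half hx]
  module

namespace IsIdem

theorem peirceHalf_mem_half (he : J.IsIdem e) (x : V) :
    J.peirceHalf e x ∈ J.peirceSpace e (1 / 2) := by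
  simp only [mem_peirceSpace, peirceHalf_apply, map_smul, map_sub]
  linear_combination (norm := module) (-2 : ℝ) • he.peirce_polynomial x

theorem sub_peirceHalf_mem_peirceEven (he : J.IsIdem e) (x : V) :
    x - J.peirceHalf e x ∈ J.peirceEven e := by
  have h := mem_peirceSpace.mp (he.peirceHalf_mem_half x)
  simp only [mem_peirceEven, map_sub, h, map_smul]
  rw [peirceHalf_apply]
  module

theorem exists_eq_add_peirce (he : J.IsIdem e) (x : V) :
    ∃ y ∈ J.peirceEven e, ∃ z ∈ J.peirceSpace e (1 / 2), x = y + z :=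
  ⟨_, he.sub_peirceHalf_mem_peirceEven x, _, he.peirceHalf_mem_half x, (sub_add_cancel _ _).symm⟩

theorem peirceReflection_mul (he : J.IsIdem e) (x y : V) :
    J.peirceReflection e (J.mul x y) =
      J.mul (J.peirceReflection e x) (J.peirceReflection e y) := by
  obtain ⟨x₀, hx₀, x₁, hx₁, rfl⟩ := he.exists_eq_add_peirce x
  obtain ⟨y₀, hy₀, y₁, hy₁, rfl⟩ := he.exists_eq_add_peirce y
  have h_even_even := peirceReflection_of_mem_peirceEven (he.mul_mem_peirceEven hx₀ hy₀)
  have h_even_half := peirceReflection_of_mem_half (he.mul_mem_peirceSpace hx₀ hy₁)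
  have h_half_even := peirceReflection_of_mem_half (he.mul_mem_peirceSpace hy₀ hx₁)
  have h_half_half :=
    peirceReflection_of_mem_peirceEven (he.mul_mem_peirceEven_of_mem_half hx₁ hy₁)
  rw [J.comm y₀ x₁] at h_half_even
  simp only [map_add, LinearMap.add_apply, map_neg, LinearMap.neg_apply, h_even_even, h_even_half,
    h_half_even, h_half_half, peirceReflection_of_mem_peirceEven hx₀,
    peirceReflection_of_mem_peirceEven hy₀, peirceReflection_of_mem_half hx₁,
    peirceReflection_of_mem_half hy₁]
  abel

theorem map_peirceReflection (he : J.IsIdem e) (hf : J.IsIdem f) :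
    J.IsIdem (J.peirceReflection e f) := by
  rw [IsIdem, ← he.peirceReflection_mul, hf.eq]

theorem inner_peirceHalf_self (he : J.IsIdem e) (x : V) :
    ⟪J.peirceHalf e x, x⟫ = ‖J.peirceHalf e x‖ ^ 2 := by
  have h_symm (y : V) : ⟪J.peirceHalf e y, x⟫ = ⟪y, J.peirceHalf e x⟫ := by
    simp only [peirceHalf_apply, real_inner_smul_left, real_inner_smul_right, inner_sub_left,
      inner_sub_right, J.assoc_inner]
  rw [← real_inner_self_eq_norm_sq, ← h_symm, peirceHalf_of_mem_half (he.peirceHalf_mem_half x)]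

theorem inner_mul_self_nonneg (he : J.IsIdem e) (x : V) : 0 ≤ ⟪J.mul e x, x⟫ := by
  have h_split : J.mul e x = J.mul e (J.mul e x) + (1 / 4 : ℝ) • J.peirceHalf e x := by
    rw [peirceHalf_apply]
    module
  rw [h_split, inner_add_left, real_inner_smul_left, J.assoc_inner, he.inner_peirceHalf_self,
    real_inner_self_eq_norm_sq]
  positivity

end IsIdem

end PeirceReflection

section Primitive

theorem eq_zero_of_mul_self_eq_zero (h : J.mul x x = 0) : x = 0 := by
  have h_inner := J.inner_mul_left x x J.one
  rw [h, inner_zero_left, J.comm, J.one_mul] at h_inner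
  exact inner_self_eq_zero.mp h_inner.symm

theorem inner_smul_mul_smul_smul (J : EJA V) (t : ℝ) (x : V) :
    ⟪J.mul (t • x) (t • x), t • x⟫ = t ^ 3 * ⟪J.mul x x, x⟫ := by
  simp only [map_smul, LinearMap.smul_apply, real_inner_smul_left, real_inner_smul_right]
  ring

theorem hasStrictFDerivAt_inner_mul_self [FiniteDimensional ℝ V] (J : EJA V) (x : V) :
    HasStrictFDerivAt (fun y => ⟪J.mul y y, y⟫) ((3 : ℝ) • innerSL ℝ (J.mul x x)) x := by
  have h_id := hasStrictFDerivAt_id (𝕜 := ℝ) x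
  have h_mul := J.mul.toContinuousBilinearMap.hasStrictFDerivAt_of_bilinear h_id h_id
  refine (h_mul.inner ℝ h_id).congr_fderiv (ContinuousLinearMap.ext fun h => ?_)
  simp [inner_add_left, J.comm h x, J.assoc_inner, real_inner_comm (J.mul x x) h]
  ring

/-- Lagrange multipliers for the cubic form `⟪x², x⟫` on the unit sphere of `W`. -/
theorem exists_mul_self_eq_smul_of_isMaxOn [FiniteDimensional ℝ V] {W : Submodule ℝ V}
    (hW : ∀ y ∈ W, J.mul y y ∈ W) {w : W} (hw : ‖w‖ = 1)
    (hmax : IsMaxOn (fun y : W => ⟪J.mul (y : V) y, (y : V)⟫) (Metric.sphere 0 1) w) :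
    ∃ μ : ℝ, J.mul (w : V) w = μ • (w : V) := by
  have h_sphere : {y : W | ‖y‖ ^ 2 = ‖w‖ ^ 2} = Metric.sphere 0 1 := by
    ext y
    rw [Set.mem_ofPred_eq, mem_sphere_zero_iff_norm, hw, sq_eq_sq₀ (norm_nonneg y) zero_le_one]
  obtain ⟨a, b, hab, h_zero⟩ := IsLocalExtrOn.exists_multipliers_of_hasStrictFDerivAt_1d
    (Or.inr (h_sphere ▸ hmax.localize)) (hasStrictFDerivAt_norm_sq w)
    ((J.hasStrictFDerivAt_inner_mul_self w).comp w W.subtypeL.hasStrictFDerivAt)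
  have h_combination : (2 * a) • (w : V) + (3 * b) • J.mul (w : V) w = 0 := by
    let z : W := (2 * a) • w + (3 * b) • ⟨_, hW w w.2⟩
    have h_apply : a * (2 * ⟪(w : V), (z : V)⟫) + b * (3 * ⟪J.mul (w : V) w, (z : V)⟫) = 0 := by
      simpa using congrArg (fun L => L z) h_zero
    have h_self : ⟪(z : V), (z : V)⟫ = 0 := by
      change ⟪(2 * a) • (w : V) + (3 * b) • J.mul (w : V) w, (z : V)⟫ = 0
      rw [inner_add_left, real_inner_smul_left, real_inner_smul_left]
      linarith
    exact inner_self_eq_zero.mp h_self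
  have hb : b ≠ 0 := by
    rintro rfl
    have hw_ne : (w : V) ≠ 0 := norm_ne_zero_iff.mp (hw ▸ one_ne_zero)
    simp [hw_ne] at h_combination
    simp [h_combination] at hab
  refine ⟨-(2 * a / (3 * b)), ?_⟩
  linear_combination (norm := skip) (3 * b)⁻¹ • h_combination
  match_scalars <;> field_simp <;> ring

theorem exists_unit_mul_self_eq_smul [FiniteDimensional ℝ V] {W : Submodule ℝ V}
    (hW : ∀ y ∈ W, J.mul y y ∈ W) (hne : W ≠ ⊥) :
    ∃ w ∈ W, ‖w‖ = 1 ∧ ∃ μ : ℝ, 0 < μ ∧ J.mul w w = μ • w ∧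
      ∀ y ∈ W, ‖y‖ = 1 → ⟪J.mul y y, y⟫ ≤ μ := by
  have : Nontrivial W := Submodule.nontrivial_iff_ne_bot.mpr hne
  have h_cont : Continuous fun y : W => ⟪J.mul (y : V) y, (y : V)⟫ :=
    continuous_iff_continuousAt.mpr fun y =>
      (J.hasStrictFDerivAt_inner_mul_self (y : V)).continuousAt.comp
        continuous_subtype_val.continuousAt
  obtain ⟨w, hw, hmax⟩ := (isCompact_sphere (0 : W) 1).exists_isMaxOn
    (NormedSpace.sphere_nonempty.mpr zero_le_one) h_cont.continuousOn
  have hw_norm : ‖(w : V)‖ = 1 := by simpa using hw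
  obtain ⟨μ, hμ⟩ := exists_mul_self_eq_smul_of_isMaxOn hW hw_norm hmax
  have h_value : ⟪J.mul (w : V) w, (w : V)⟫ = μ := by
    rw [hμ, real_inner_smul_left, real_inner_self_eq_norm_sq, hw_norm, one_pow, mul_one]
  have h_le : ∀ y ∈ W, ‖y‖ = 1 → ⟪J.mul y y, y⟫ ≤ μ := fun y hy hy_norm =>
    h_value ▸ hmax (show (⟨y, hy⟩ : W) ∈ Metric.sphere 0 1 by simpa using hy_norm)
  have hμ_nonneg : 0 ≤ μ := by
    have h_neg := h_le (-w) (neg_mem w.2) (by rw [norm_neg, hw_norm])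
    simp only [map_neg, LinearMap.neg_apply, neg_neg, inner_neg_right, h_value] at h_neg
    linarith
  have hμ_ne : μ ≠ 0 := by
    rintro rfl
    rw [eq_zero_of_mul_self_eq_zero (hμ.trans (zero_smul ℝ _)), norm_zero] at hw_norm
    exact zero_ne_one hw_norm
  exact ⟨w, w.2, hw_norm, μ, hμ_nonneg.lt_of_ne' hμ_ne, hμ, h_le⟩

theorem exists_isIdem_forall_norm_mul_inner_le [FiniteDimensional ℝ V] {W : Submodule ℝ V}
    (hW : ∀ y ∈ W, J.mul y y ∈ W) (hne : W ≠ ⊥) :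
    ∃ e ∈ W, e ≠ 0 ∧ J.IsIdem e ∧ ∀ y ∈ W, ‖e‖ * ⟪J.mul y y, y⟫ ≤ ‖y‖ ^ 3 := by
  obtain ⟨w, hw, hw_norm, μ, hμ_pos, hμ, h_le⟩ := exists_unit_mul_self_eq_smul hW hne
  have hw_ne : w ≠ 0 := norm_ne_zero_iff.mp (hw_norm ▸ one_ne_zero)
  refine ⟨μ⁻¹ • w, W.smul_mem _ hw, smul_ne_zero (inv_ne_zero hμ_pos.ne') hw_ne, ?_, ?_⟩
  · rw [IsIdem, map_smul, LinearMap.map_smul₂, hμ, inv_smul_smul₀ hμ_pos.ne']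
  intro y hy
  obtain rfl | hy_ne := eq_or_ne y 0
  · simp
  have hy_pos := norm_pos_iff.mpr hy_ne
  have h_unit := h_le (‖y‖⁻¹ • y) (W.smul_mem _ hy) (norm_smul_inv_norm hy_ne)
  rw [inner_smul_mul_smul_smul, inv_pow, inv_mul_le_iff₀ (pow_pos hy_pos 3)] at h_unit
  rwa [norm_smul, hw_norm, mul_one, norm_inv, Real.norm_of_nonneg hμ_pos.le,
    inv_mul_le_iff₀ hμ_pos, mul_comm]

theorem IsIdem.mul_self_mem_peirceSpace_one (he : J.IsIdem e) (hx : x ∈ J.peirceSpace e 1) :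
    J.mul x x ∈ J.peirceSpace e 1 :=
  he.mul_mem_peirceSpace (peirceSpace_one_le_peirceEven hx) hx

namespace IsPrimitiveIdem

theorem isIdem (hc : J.IsPrimitiveIdem c) : J.IsIdem c := hc.1

theorem ne_zero (hc : J.IsPrimitiveIdem c) : c ≠ 0 := hc.2.1

theorem eq_of_isIdem_of_mem_peirceSpace_one (hc : J.IsPrimitiveIdem c) (he : J.IsIdem e)
    (he_ne : e ≠ 0) (hce : e ∈ J.peirceSpace c 1) : e = c := by
  rw [mem_peirceSpace_one] at hce
  have hec : J.mul e c = e := by rw [J.comm, hce]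
  have h_compl : J.IsIdem (c - e) := by
    simp only [IsIdem, map_sub, LinearMap.sub_apply, hc.isIdem.eq, hce, hec, he.eq]
    abel
  have h_orth : J.mul e (c - e) = 0 := by rw [map_sub, hec, he.eq, sub_self]
  have h_zero := hc.2.2 e (c - e) he h_compl h_orth (add_sub_cancel e c).symm
  exact (sub_eq_zero.mp (h_zero.resolve_left he_ne)).symm

/-- If `k ≠ 0`, rescale it to the norm of `c`. Expanding the cubic form at `c + k` and `c - k` then
gives the sum `8 ‖c‖²`, while the assumed bound is `2 (√2)³ ‖c‖²`. -/
theorem eq_zero_of_forall_norm_mul_inner_le (hc : J.IsPrimitiveIdem c)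
    (hle : ∀ y ∈ J.peirceSpace c 1, ‖c‖ * ⟪J.mul y y, y⟫ ≤ ‖y‖ ^ 3)
    (hx : x ∈ J.peirceSpace c 1) (hcx : ⟪c, x⟫ = 0) : x = 0 := by
  by_contra hx_ne
  have hc_pos := norm_pos_iff.mpr hc.ne_zero
  have hc_mem : c ∈ J.peirceSpace c 1 := mem_peirceSpace_one.mpr hc.isIdem
  obtain ⟨k, hk, hck, hk_norm⟩ : ∃ k ∈ J.peirceSpace c 1, ⟪c, k⟫ = 0 ∧ ‖k‖ = ‖c‖ :=
    ⟨(‖c‖ * ‖x‖⁻¹) • x, Submodule.smul_mem _ _ hx, by rw [real_inner_smul_right, hcx, mul_zero],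
      by rw [norm_smul, norm_mul, norm_norm, norm_inv, norm_norm,
        inv_mul_cancel_right₀ (norm_ne_zero_iff.mpr hx_ne)]⟩
  have h_sum : ⟪J.mul (c + k) (c + k), c + k⟫ + ⟪J.mul (c - k) (c - k), c - k⟫ = 8 * ‖c‖ ^ 2 := by
    have hck_mul : J.mul c k = k := mem_peirceSpace_one.mp hk
    have hkk : ⟪J.mul k k, c⟫ = ‖c‖ ^ 2 := by
      rw [J.inner_mul_left, J.comm, hck_mul, real_inner_self_eq_norm_sq, hk_norm]
    simp only [map_add, map_sub, LinearMap.add_apply, LinearMap.sub_apply, inner_add_left,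
      inner_add_right, inner_sub_left, inner_sub_right, J.comm k c, hck_mul, hc.isIdem.eq, hkk,
      hck, real_inner_comm c k, real_inner_self_eq_norm_sq, hk_norm]
    ring
  have h_norm_add : ‖c + k‖ ^ 2 = 2 * ‖c‖ ^ 2 := by
    rw [norm_add_sq_real, hck, hk_norm]
    ring
  have h_norm_sub : ‖c - k‖ ^ 2 = 2 * ‖c‖ ^ 2 := by
    rw [norm_sub_sq_real, hck, hk_norm]
    ring
  have h_norm_eq : ‖c - k‖ = ‖c + k‖ := by
    rw [← sq_eq_sq₀ (norm_nonneg _) (norm_nonneg _), h_norm_sub, h_norm_add]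
  have h_add := hle _ (add_mem hc_mem hk)
  have h_sub := hle _ (sub_mem hc_mem hk)
  rw [h_norm_eq] at h_sub
  have h_norm_le : 2 * ‖c‖ ≤ ‖c + k‖ := by
    refine le_of_mul_le_mul_left ?_ (pow_pos hc_pos 2)
    linear_combination (1 / 4) * h_add + (1 / 4) * h_sub - (‖c‖ / 4) * h_sum
      + (‖c + k‖ / 2) * h_norm_add
  nlinarith

theorem peirceSpace_one_eq_span [FiniteDimensional ℝ V] (hc : J.IsPrimitiveIdem c) :
    J.peirceSpace c 1 = ℝ ∙ c := by
  have hc_mem : c ∈ J.peirceSpace c 1 := mem_peirceSpace_one.mpr hc.isIdem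
  have h_ne_bot : J.peirceSpace c 1 ≠ ⊥ := (Submodule.ne_bot_iff _).mpr ⟨c, hc_mem, hc.ne_zero⟩
  obtain ⟨e, he_mem, he_ne, he, hle⟩ := exists_isIdem_forall_norm_mul_inner_le
    (fun _ => hc.isIdem.mul_self_mem_peirceSpace_one) h_ne_bot
  rw [hc.eq_of_isIdem_of_mem_peirceSpace_one he he_ne he_mem] at hle
  refine le_antisymm (fun x hx => ?_) ((Submodule.span_singleton_le_iff_mem _ _).mpr hc_mem)
  let p : ℝ := ⟪c, x⟫ / ⟪c, c⟫
  have h_orth : ⟪c, x - p • c⟫ = 0 := by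
    rw [inner_sub_right, real_inner_smul_right,
      div_mul_cancel₀ _ (inner_self_ne_zero.mpr hc.ne_zero), sub_self]
  have h_eq := hc.eq_zero_of_forall_norm_mul_inner_le hle
    (sub_mem hx (Submodule.smul_mem _ p hc_mem)) h_orth
  exact Submodule.mem_span_singleton.mpr ⟨p, (sub_eq_zero.mp h_eq).symm⟩

end IsPrimitiveIdem

end Primitive

section OffDiagonal

/-- The off-diagonal Peirce space `V_{1/2}(e) ∩ V_{1/2}(f)` of two orthogonal idempotents `e` and
`f`; for two members `cᵢ`, `cⱼ` of a Jordan frame it is the space usually written `Vᵢⱼ`. -/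
noncomputable def offDiagonal (J : EJA V) (e f : V) : Submodule ℝ V :=
  J.peirceSpace e (1 / 2) ⊓ J.peirceSpace f (1 / 2)

theorem mem_offDiagonal :
    u ∈ J.offDiagonal e f ↔ J.mul e u = (1 / 2 : ℝ) • u ∧ J.mul f u = (1 / 2 : ℝ) • u := by
  rw [offDiagonal, Submodule.mem_inf, mem_peirceSpace, mem_peirceSpace]

theorem IsIdem.mul_mul_mem_half (he : J.IsIdem e) (hef : J.mul e f = 0) (x : V) :
    J.mul e (J.mul f x) ∈ J.peirceSpace e (1 / 2) := by
  have hf_zero : f ∈ J.peirceSpace e 0 := mem_peirceSpace_zero.mpr hef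
  have h_comm := he.mul_left_comm_of_mem_peirceEven (peirceSpace_zero_le_peirceEven hf_zero)
  have h_mul := he.mul_eq_zero_of_mem_one_of_mem_zero
    (he.two_smul_mul_mul_sub_mem_peirceSpace_one x) hf_zero
  rw [J.comm, map_sub, map_smul] at h_mul
  rw [mem_peirceSpace, h_comm, h_comm]
  linear_combination (norm := module) (1 / 2 : ℝ) • h_mul

theorem IsIdem.mul_mul_mem_offDiagonal (he : J.IsIdem e) (hf : J.IsIdem f)
    (hef : J.mul e f = 0) (x : V) : J.mul e (J.mul f x) ∈ J.offDiagonal e f := by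
  have hf_even : f ∈ J.peirceEven e :=
    peirceSpace_zero_le_peirceEven (mem_peirceSpace_zero.mpr hef)
  refine ⟨he.mul_mul_mem_half hef x, ?_⟩
  rw [he.mul_left_comm_of_mem_peirceEven hf_even]
  exact hf.mul_mul_mem_half (by rw [J.comm, hef]) x

theorem IsIdem.add (he : J.IsIdem e) (hf : J.IsIdem f) (hef : J.mul e f = 0) :
    J.IsIdem (e + f) := by
  have hfe : J.mul f e = 0 := by rw [J.comm, hef]
  simp only [IsIdem, map_add, LinearMap.add_apply, he.eq, hf.eq, hef, hfe, add_zero, zero_add]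

theorem mem_peirceSpace_add_one_of_mem_offDiagonal (hu : u ∈ J.offDiagonal e f) :
    u ∈ J.peirceSpace (e + f) 1 := by
  obtain ⟨heu, hfu⟩ := mem_offDiagonal.mp hu
  rw [mem_peirceSpace, map_add, LinearMap.add_apply, heu, hfu]
  module

theorem IsPrimitiveIdem.exists_pos_mul_mul_self [FiniteDimensional ℝ V]
    (he : J.IsPrimitiveIdem e) (hu : u ∈ J.peirceSpace e (1 / 2)) (hu_ne : u ≠ 0) :
    ∃ p : ℝ, 0 < p ∧ J.mul e (J.mul u u) = p • e := by
  have h_mem := mul_mem_peirceSpace_one_of_mem_peirceEven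
    (he.isIdem.mul_self_mem_peirceEven_of_mem_half hu)
  rw [he.peirceSpace_one_eq_span, Submodule.mem_span_singleton] at h_mem
  obtain ⟨p, hp⟩ := h_mem
  have h_inner : p * ‖e‖ ^ 2 = 1 / 2 * ‖u‖ ^ 2 := by
    calc p * ‖e‖ ^ 2 = ⟪J.mul e (J.mul u u), e⟫ := by
          rw [← hp, real_inner_smul_left, real_inner_self_eq_norm_sq]
      _ = ⟪u, J.mul e u⟫ := by rw [J.assoc_inner, he.isIdem.eq, J.inner_mul_left, J.comm]
      _ = 1 / 2 * ‖u‖ ^ 2 := by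
          rw [mem_peirceSpace.mp hu, real_inner_smul_right, real_inner_self_eq_norm_sq]
  have h_pos : 0 < p * ‖e‖ ^ 2 :=
    h_inner ▸ mul_pos one_half_pos (pow_pos (norm_pos_iff.mpr hu_ne) 2)
  exact ⟨p, pos_of_mul_pos_left h_pos (sq_nonneg ‖e‖), hp.symm⟩

theorem exists_pos_mul_self_eq_smul_add [FiniteDimensional ℝ V] (he : J.IsPrimitiveIdem e)
    (hf : J.IsPrimitiveIdem f) (hef : J.mul e f = 0) (hu : u ∈ J.offDiagonal e f)
    (hu_ne : u ≠ 0) : ∃ p : ℝ, 0 < p ∧ J.mul u u = p • (e + f) := by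
  obtain ⟨p, hp_pos, hp⟩ := he.exists_pos_mul_mul_self hu.1 hu_ne
  obtain ⟨q, -, hq⟩ := hf.exists_pos_mul_mul_self hu.2 hu_ne
  obtain ⟨heu, hfu⟩ := mem_offDiagonal.mp hu
  have huu : J.mul u u = p • e + q • f := by
    rw [← hp, ← hq, ← LinearMap.add_apply, ← map_add]
    exact (mem_peirceSpace_one.mp <| (he.isIdem.add hf.isIdem hef).mul_self_mem_peirceSpace_one
      (mem_peirceSpace_add_one_of_mem_offDiagonal hu)).symm
  have h_jordan : (p * ((p + q) / 2)) • e = (p * p) • e := by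
    have h := congrArg (J.mul e) (J.jordan u u)
    simp only [huu, map_add, map_smul, LinearMap.add_apply, LinearMap.smul_apply, heu, hfu,
      he.isIdem.eq, hf.isIdem.eq, hef, J.comm f e, map_zero, smul_zero, add_zero] at h
    linear_combination (norm := module) h
  have hpq : p = q := by
    have := mul_left_cancel₀ hp_pos.ne' (smul_left_injective ℝ he.ne_zero h_jordan)
    linarith
  exact ⟨p, hp_pos, by rw [huu, ← hpq, smul_add]⟩

theorem exists_smul_mul_self_eq_add [FiniteDimensional ℝ V] (he : J.IsPrimitiveIdem e)
    (hf : J.IsPrimitiveIdem f) (hef : J.mul e f = 0) (hu : u ∈ J.offDiagonal e f)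
    (hu_ne : u ≠ 0) : ∃ k : ℝ, k ≠ 0 ∧ J.mul (k • u) (k • u) = e + f := by
  obtain ⟨p, hp_pos, huu⟩ := exists_pos_mul_self_eq_smul_add he hf hef hu hu_ne
  have h_sqrt : (√p)⁻¹ * (√p)⁻¹ * p = 1 := by
    rw [← mul_inv, Real.mul_self_sqrt hp_pos.le, inv_mul_cancel₀ hp_pos.ne']
  refine ⟨(√p)⁻¹, inv_ne_zero (Real.sqrt_ne_zero'.mpr hp_pos), ?_⟩
  rw [map_smul, LinearMap.map_smul₂, huu, smul_smul, smul_smul, h_sqrt, one_smul]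

end OffDiagonal

section Rotation

theorem IsIdem.half_smul_add (hd : J.IsIdem d) (hw : w ∈ J.peirceSpace d 1)
    (hww : J.mul w w = d) : J.IsIdem ((1 / 2 : ℝ) • (d + w)) := by
  simp only [IsIdem, map_smul, map_add, LinearMap.smul_apply, LinearMap.add_apply, hd.eq, hww,
    J.comm w d, mem_peirceSpace_one.mp hw]
  module

theorem add_smul_mem_peirceEven_half_smul_add (hd : J.IsIdem d) (hw : w ∈ J.peirceSpace d 1)
    (hww : J.mul w w = d) (t : ℝ) : d + t • w ∈ J.peirceEven ((1 / 2 : ℝ) • (d + w)) := by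
  simp only [mem_peirceEven, map_smul, map_add, LinearMap.smul_apply, LinearMap.add_apply, hd.eq,
    hww, J.comm w d, mem_peirceSpace_one.mp hw]
  module

theorem mem_half_of_mul_eq_zero (hx : x ∈ J.peirceSpace d 1) (hwx : J.mul w x = 0) :
    x ∈ J.peirceSpace ((1 / 2 : ℝ) • (d + w)) (1 / 2) := by
  rw [mem_peirceSpace, LinearMap.map_smul₂, LinearMap.map_add₂, mem_peirceSpace_one.mp hx, hwx,
    add_zero]

variable {C S : ℝ}

theorem rotate_mem_peirceSpace_one (he : J.IsIdem e) (hf : J.IsIdem f) (hef : J.mul e f = 0)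
    (hv : v ∈ J.offDiagonal e f) (C S : ℝ) :
    C • (e - f) + S • v ∈ J.peirceSpace (e + f) 1 := by
  obtain ⟨hev, hfv⟩ := mem_offDiagonal.mp hv
  simp only [mem_peirceSpace, map_add, map_sub, map_smul, LinearMap.add_apply, he.eq, hf.eq, hef,
    J.comm f e, hev, hfv]
  module

theorem rotate_mul_rotate (he : J.IsIdem e) (hf : J.IsIdem f) (hef : J.mul e f = 0)
    (hv : v ∈ J.offDiagonal e f) (hvv : J.mul v v = e + f) (C S C' S' : ℝ) :
    J.mul (C • (e - f) + S • v) (C' • (e - f) + S' • v) = (C * C' + S * S') • (e + f) := by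
  obtain ⟨hev, hfv⟩ := mem_offDiagonal.mp hv
  simp only [map_add, map_sub, map_smul, LinearMap.add_apply, LinearMap.sub_apply,
    LinearMap.smul_apply, he.eq, hf.eq, hef, J.comm f e, J.comm v e, J.comm v f, hev, hfv, hvv]
  module

/-- The rotated idempotent `g` fixes `e + f` and `w`, and negates the square root `w'` of `e + f`
orthogonal to `w`; together these span `e`. -/
theorem peirceReflection_rotate (he : J.IsIdem e) (hf : J.IsIdem f) (hef : J.mul e f = 0)
    (hv : v ∈ J.offDiagonal e f) (hvv : J.mul v v = e + f) (hCS : C ^ 2 + S ^ 2 = 1) :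
    J.peirceReflection ((1 / 2 : ℝ) • (e + f + (C • (e - f) + S • v))) e =
      C ^ 2 • e + S ^ 2 • f + (C * S) • v := by
  let w := C • (e - f) + S • v
  let w' := S • (e - f) + (-C) • v
  let g := (1 / 2 : ℝ) • (e + f + w)
  have hww : J.mul w w = e + f := by
    rw [rotate_mul_rotate he hf hef hv hvv, ← sq, ← sq, hCS, one_smul]
  have hww' : J.mul w w' = 0 := by
    rw [rotate_mul_rotate he hf hef hv hvv, show C * S + S * -C = 0 by ring, zero_smul]
  have h_even : e + f + C • w ∈ J.peirceEven g :=
    add_smul_mem_peirceEven_half_smul_add (he.add hf hef)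
      (rotate_mem_peirceSpace_one he hf hef hv C S) hww C
  have h_half : w' ∈ J.peirceSpace g (1 / 2) :=
    mem_half_of_mul_eq_zero (rotate_mem_peirceSpace_one he hf hef hv S (-C)) hww'
  have h_split : e = (1 / 2 : ℝ) • (e + f + C • w) + (S / 2) • w' := by
    simp only [w, w']
    linear_combination (norm := module)
      (-(1 / 2) : ℝ) • congrArg (fun t : ℝ => t • (e - f)) hCS
  calc J.peirceReflection g e = (1 / 2 : ℝ) • (e + f + C • w) - (S / 2) • w' := by
        nth_rewrite 1 [h_split]
        rw [map_add, map_smul, map_smul, peirceReflection_of_mem_peirceEven h_even,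
          peirceReflection_of_mem_half h_half, smul_neg, sub_eq_add_neg]
    _ = C ^ 2 • e + S ^ 2 • f + (C * S) • v := by
        simp only [w, w']
        linear_combination (norm := module)
          (-(1 / 2) : ℝ) • congrArg (fun t : ℝ => t • (e + f)) hCS

end Rotation

section Frame

variable {r : ℕ} {c : Fin r → V}

theorem IsSimple.eq_zero_or_eq_one_of_peirceEven_eq_top (hJ : J.IsSimple) (he : J.IsIdem e)
    (h_even : J.peirceEven e = ⊤) : e = 0 ∨ e = J.one := by
  have h_mem (x : V) : x ∈ J.peirceEven e := h_even ▸ Submodule.mem_top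
  have h_ideal : J.IsIdeal (J.peirceSpace e 1) := by
    intro x hx y
    rw [J.comm]
    exact he.mul_mem_peirceSpace (h_mem y) hx
  rcases hJ.2 _ h_ideal with h_bot | h_top
  · left
    rw [← Submodule.mem_bot ℝ, ← h_bot]
    exact mem_peirceSpace_one.mpr he
  · right
    have h_one : J.one ∈ J.peirceSpace e 1 := h_top ▸ Submodule.mem_top
    rwa [mem_peirceSpace_one, J.comm, J.one_mul] at h_one

namespace IsJordanFrame

theorem isPrimitiveIdem (hc : J.IsJordanFrame c) (i : Fin r) : J.IsPrimitiveIdem (c i) := hc.1 i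

theorem isIdem (hc : J.IsJordanFrame c) (i : Fin r) : J.IsIdem (c i) := (hc.1 i).isIdem

theorem mul_eq_zero (hc : J.IsJordanFrame c) {i j : Fin r} (hij : i ≠ j) :
    J.mul (c i) (c j) = 0 :=
  hc.2.1 i j hij

theorem sum_eq_one (hc : J.IsJordanFrame c) : ∑ i, c i = J.one := hc.2.2

theorem sum_mul (hc : J.IsJordanFrame c) (x : V) : ∑ i, J.mul (c i) x = x := by
  rw [← LinearMap.sum_apply, ← map_sum, hc.sum_eq_one, J.one_mul]

theorem mul_mul_mem_offDiagonal (hc : J.IsJordanFrame c) {i j : Fin r} (hij : i ≠ j) (x : V) :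
    J.mul (c i) (J.mul (c j) x) ∈ J.offDiagonal (c i) (c j) :=
  (hc.isIdem i).mul_mul_mem_offDiagonal (hc.isIdem j) (hc.mul_eq_zero hij) x

theorem sum_mul_of_mem (hc : J.IsJordanFrame c) {s : Finset (Fin r)} {i : Fin r} (hi : i ∈ s) :
    J.mul (∑ j ∈ s, c j) (c i) = c i := by
  rw [map_sum, LinearMap.sum_apply, Finset.sum_eq_single_of_mem i hi, (hc.isIdem i).eq]
  exact fun j _ hji => hc.mul_eq_zero hji

theorem sum_mul_of_notMem (hc : J.IsJordanFrame c) {s : Finset (Fin r)} {i : Fin r}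
    (hi : i ∉ s) : J.mul (∑ j ∈ s, c j) (c i) = 0 := by
  rw [map_sum, LinearMap.sum_apply]
  exact Finset.sum_eq_zero fun j hj => hc.mul_eq_zero (ne_of_mem_of_not_mem hj hi)

theorem isIdem_sum (hc : J.IsJordanFrame c) (s : Finset (Fin r)) : J.IsIdem (∑ i ∈ s, c i) := by
  rw [IsIdem, map_sum (J.mul _)]
  exact Finset.sum_congr rfl fun i hi => hc.sum_mul_of_mem hi

theorem mem_peirceEven_sum (hc : J.IsJordanFrame c) {s : Finset (Fin r)}
    (hs : ∀ i ∈ s, ∀ j ∉ s, J.offDiagonal (c i) (c j) = ⊥) (x : V) :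
    x ∈ J.peirceEven (∑ i ∈ s, c i) := by
  have h_cross : J.mul (∑ i ∈ s, c i) (∑ j ∈ sᶜ, J.mul (c j) x) = 0 := by
    rw [map_sum (J.mul _), map_sum J.mul]
    refine Finset.sum_eq_zero fun j hj => ?_
    rw [LinearMap.sum_apply]
    refine Finset.sum_eq_zero fun i hi => ?_
    have hj := Finset.mem_compl.mp hj
    rw [← Submodule.mem_bot ℝ, ← hs i hi j hj]
    exact hc.mul_mul_mem_offDiagonal (ne_of_mem_of_not_mem hi hj) x
  have h_decomp : J.mul (∑ i ∈ s, c i) x + ∑ j ∈ sᶜ, J.mul (c j) x = x := by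
    rw [map_sum J.mul, LinearMap.sum_apply, Finset.sum_add_sum_compl, hc.sum_mul]
  have h := congrArg (J.mul (∑ i ∈ s, c i)) h_decomp
  rwa [map_add, h_cross, add_zero] at h

/-- The graph on the frame that joins `i` and `j` when `Vᵢⱼ ≠ 0` is connected. -/
theorem exists_offDiagonal_ne_bot (hc : J.IsJordanFrame c) (hJ : J.IsSimple)
    {s : Finset (Fin r)} {k l : Fin r} (hk : k ∈ s) (hl : l ∉ s) :
    ∃ i ∈ s, ∃ j ∉ s, J.offDiagonal (c i) (c j) ≠ ⊥ := by
  by_contra! h_bot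
  have h_even : J.peirceEven (∑ i ∈ s, c i) = ⊤ :=
    Submodule.eq_top_iff'.mpr (hc.mem_peirceEven_sum h_bot)
  rcases hJ.eq_zero_or_eq_one_of_peirceEven_eq_top (hc.isIdem_sum s) h_even with h_zero | h_one
  · apply (hc.isPrimitiveIdem k).ne_zero
    rw [← hc.sum_mul_of_mem hk, h_zero, map_zero, LinearMap.zero_apply]
  · apply (hc.isPrimitiveIdem l).ne_zero
    rw [← hc.sum_mul_of_notMem hl, h_one, J.one_mul]

end IsJordanFrame

end Frame

section OrthoIdemNonpos

/-- A linear functional `φ` with `φ e * φ f ≤ 0` for all idempotents `e` and `f` with `e f = 0`.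
For `φ = ⟪a, ·⟫` this is what the inequality `⟪a, x⟫ ⟪a, y⟫ ≤ ⟪x, y⟫` of a lattice-like hyperplane
says about such pairs. -/
def OrthoIdemNonpos (J : EJA V) (φ : Module.Dual ℝ V) : Prop :=
  ∀ e f : V, J.IsIdem e → J.IsIdem f → J.mul e f = 0 → φ e * φ f ≤ 0

theorem orthoIdemNonpos_innerₗ {a : V}
    (ha : ∀ x ∈ J.coneOfSquares, x - ⟪a, x⟫ • a ∈ J.coneOfSquares) :
    J.OrthoIdemNonpos (innerₗ V a) := by
  intro e f he hf hef
  obtain ⟨y, hy⟩ := ha e ⟨e, he.symm⟩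
  have h_orth : ⟪e, f⟫ = 0 := by rw [← he.eq, J.inner_mul_left, hef, inner_zero_right]
  have h_nonneg : 0 ≤ ⟪J.mul y y, f⟫ := by
    rw [J.assoc_inner, J.comm, real_inner_comm]
    exact hf.inner_mul_self_nonneg y
  rw [← hy, inner_sub_left, real_inner_smul_left, h_orth] at h_nonneg
  rw [innerₗ_apply_apply, innerₗ_apply_apply]
  linarith

theorem exists_sq_add_sq_eq_one_mul_add_mul_eq_zero (a b : ℝ) :
    ∃ C S : ℝ, C ^ 2 + S ^ 2 = 1 ∧ C * a + S * b = 0 := by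
  let z : ℂ := ⟨a, b⟩
  refine ⟨-Real.sin z.arg, Real.cos z.arg, by rw [neg_sq, Real.sin_sq_add_cos_sq], ?_⟩
  linear_combination Real.sin z.arg * Complex.norm_mul_cos_arg z
    - Real.cos z.arg * Complex.norm_mul_sin_arg z

namespace OrthoIdemNonpos

variable {φ : Module.Dual ℝ V}

theorem comp_peirceReflection (hφ : J.OrthoIdemNonpos φ) (hg : J.IsIdem g) :
    J.OrthoIdemNonpos (φ ∘ₗ J.peirceReflection g) := fun e f he hf hef =>
  hφ _ _ (hg.map_peirceReflection he) (hg.map_peirceReflection hf)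
    (by rw [← hg.peirceReflection_mul, hef, map_zero])

theorem sq_apply_le_sq_apply (hφ : J.OrthoIdemNonpos φ) (hd : J.IsIdem d)
    (hw : w ∈ J.peirceSpace d 1) (hww : J.mul w w = d) : φ d ^ 2 ≤ φ w ^ 2 := by
  have hw_neg : J.mul (-w) (-w) = d := by rw [map_neg, LinearMap.map_neg₂, neg_neg, hww]
  have h_orth : J.mul ((1 / 2 : ℝ) • (d + w)) ((1 / 2 : ℝ) • (d + -w)) = 0 := by
    simp only [map_smul, map_add, map_neg, LinearMap.smul_apply, LinearMap.add_apply, hd.eq, hww,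
      J.comm w d, mem_peirceSpace_one.mp hw]
    module
  have h := hφ _ _ (hd.half_smul_add hw hww) (hd.half_smul_add (neg_mem hw) hw_neg) h_orth
  simp only [map_smul, map_add, map_neg, smul_eq_mul] at h
  linarith

/-- Rotate `e - f` towards a square root of `e + f` in the off-diagonal space until `φ` vanishes. -/
theorem apply_add_eq_zero [FiniteDimensional ℝ V] (hφ : J.OrthoIdemNonpos φ)
    (he : J.IsPrimitiveIdem e) (hf : J.IsPrimitiveIdem f) (hef : J.mul e f = 0)
    (hne : J.offDiagonal e f ≠ ⊥) : φ (e + f) = 0 := by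
  obtain ⟨u, hu, hu_ne⟩ := Submodule.exists_mem_ne_zero_of_ne_bot hne
  obtain ⟨k, -, hvv⟩ := exists_smul_mul_self_eq_add he hf hef hu hu_ne
  have hv : k • u ∈ J.offDiagonal e f := Submodule.smul_mem _ k hu
  obtain ⟨C, S, hCS, h_zero⟩ :=
    exists_sq_add_sq_eq_one_mul_add_mul_eq_zero (φ (e - f)) (φ (k • u))
  have hww := rotate_mul_rotate he.isIdem hf.isIdem hef hv hvv C S C S
  rw [← sq, ← sq, hCS, one_smul] at hww
  have h_le := hφ.sq_apply_le_sq_apply (he.isIdem.add hf.isIdem hef)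
    (rotate_mem_peirceSpace_one he.isIdem hf.isIdem hef hv C S) hww
  rw [map_add φ (C • _), map_smul, map_smul φ S, smul_eq_mul, smul_eq_mul, h_zero] at h_le
  exact pow_eq_zero_iff two_ne_zero |>.mp (le_antisymm (by simpa using h_le) (sq_nonneg _))

variable {r : ℕ} {c : Fin r → V}

theorem exists_apply_frame_eq_zero (hφ : J.OrthoIdemNonpos φ) (hc : J.IsJordanFrame c)
    (hr : 3 ≤ r) : ∃ i, φ (c i) = 0 := by
  by_contra! h_ne
  have h_neg {i j : Fin r} (hij : i ≠ j) : φ (c i) * φ (c j) < 0 :=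
    (hφ _ _ (hc.isIdem i) (hc.isIdem j) (hc.mul_eq_zero hij)).lt_of_ne
      (mul_ne_zero (h_ne i) (h_ne j))
  have h₀₁ := h_neg (i := ⟨0, by omega⟩) (j := ⟨1, by omega⟩) (by simp)
  have h₁₂ := h_neg (i := ⟨1, by omega⟩) (j := ⟨2, by omega⟩) (by simp)
  have h₀₂ := h_neg (i := ⟨0, by omega⟩) (j := ⟨2, by omega⟩) (by simp)
  nlinarith [mul_pos_of_neg_of_neg h₀₁ h₁₂, sq_nonneg (φ (c ⟨1, by omega⟩))]

theorem apply_frame_eq_zero [FiniteDimensional ℝ V] (hφ : J.OrthoIdemNonpos φ)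
    (hJ : J.IsSimple) (hc : J.IsJordanFrame c) (hr : 3 ≤ r) (k : Fin r) : φ (c k) = 0 := by
  by_contra hk
  obtain ⟨l, hl⟩ := hφ.exists_apply_frame_eq_zero hc hr
  obtain ⟨i, hi, j, hj, hij⟩ := hc.exists_offDiagonal_ne_bot hJ (k := k) (l := l)
    (s := {i | φ (c i) ≠ 0}) (by simpa using hk) (by simpa using hl)
  have hi : φ (c i) ≠ 0 := by simpa using hi
  have hj : φ (c j) = 0 := by simpa using hj
  have h_add := hφ.apply_add_eq_zero (hc.isPrimitiveIdem i) (hc.isPrimitiveIdem j)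
    (hc.mul_eq_zero (fun h => hi (h ▸ hj))) hij
  rw [map_add, hj, add_zero] at h_add
  exact hi h_add

/-- Peirce reflections are automorphisms, so composing `φ` with one of them gives another functional
that kills the frame. For a rotated idempotent the image of `c i` has a nonzero component along `u`;
the angle with cosine `3 / 5` serves as well as any with nonzero sine and cosine. -/
theorem apply_offDiagonal_eq_zero [FiniteDimensional ℝ V] (hφ : J.OrthoIdemNonpos φ)
    (hJ : J.IsSimple) (hc : J.IsJordanFrame c) (hr : 3 ≤ r) {i j : Fin r} (hij : i ≠ j)
    (hu : u ∈ J.offDiagonal (c i) (c j)) : φ u = 0 := by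
  obtain rfl | hu_ne := eq_or_ne u 0
  · exact map_zero φ
  have hi := hc.isPrimitiveIdem i
  have hj := hc.isPrimitiveIdem j
  have hij_mul := hc.mul_eq_zero hij
  obtain ⟨k, hk, hvv⟩ := exists_smul_mul_self_eq_add hi hj hij_mul hu hu_ne
  have hv : k • u ∈ J.offDiagonal (c i) (c j) := Submodule.smul_mem _ k hu
  have hCS : (3 / 5 : ℝ) ^ 2 + (4 / 5 : ℝ) ^ 2 = 1 := by norm_num
  have hww := rotate_mul_rotate hi.isIdem hj.isIdem hij_mul hv hvv (3 / 5) (4 / 5) (3 / 5) (4 / 5)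
  rw [← sq, ← sq, hCS, one_smul] at hww
  have hg := (hi.isIdem.add hj.isIdem hij_mul).half_smul_add
    (rotate_mem_peirceSpace_one hi.isIdem hj.isIdem hij_mul hv (3 / 5) (4 / 5)) hww
  have h_reflected := (hφ.comp_peirceReflection hg).apply_frame_eq_zero hJ hc hr i
  rw [LinearMap.comp_apply, peirceReflection_rotate hi.isIdem hj.isIdem hij_mul hv hvv hCS]
    at h_reflected
  simpa [hφ.apply_frame_eq_zero hJ hc hr, hk] using h_reflected

theorem apply_frame_mul_eq_zero [FiniteDimensional ℝ V] (hφ : J.OrthoIdemNonpos φ)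
    (hJ : J.IsSimple) (hc : J.IsJordanFrame c) (hr : 3 ≤ r) (i : Fin r) (x : V) :
    φ (J.mul (c i) x) = 0 := by
  have h_twice : φ (J.mul (c i) x) = φ (J.mul (c i) (J.mul (c i) x)) := by
    conv_lhs => rw [← hc.sum_mul x, map_sum, map_sum]
    refine Finset.sum_eq_single_of_mem i (Finset.mem_univ i) fun j _ hji => ?_
    exact hφ.apply_offDiagonal_eq_zero hJ hc hr hji.symm (hc.mul_mul_mem_offDiagonal hji.symm x)
  have h_diag : φ ((2 : ℝ) • J.mul (c i) (J.mul (c i) x) - J.mul (c i) x) = 0 := by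
    have h_mem := (hc.isIdem i).two_smul_mul_mul_sub_mem_peirceSpace_one x
    rw [(hc.isPrimitiveIdem i).peirceSpace_one_eq_span, Submodule.mem_span_singleton] at h_mem
    obtain ⟨p, hp⟩ := h_mem
    rw [← hp, map_smul, hφ.apply_frame_eq_zero hJ hc hr, smul_zero]
  rw [map_sub, map_smul, smul_eq_mul] at h_diag
  linarith

end OrthoIdemNonpos

end OrthoIdemNonpos

end EJA

theorem no_latticeLike_hyperplane_of_rank_ge_three_general
    {V : Type*} [NormedAddCommGroup V] [InnerProductSpace ℝ V]
    [FiniteDimensional ℝ V] (J : EJA V) (hsimple : J.IsSimple)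
    {r : ℕ} (c : Fin r → V) (hc : J.IsJordanFrame c) (hr : 3 ≤ r)
    (φ : Module.Dual ℝ V) (hφ : J.OrthoIdemNonpos φ) : φ = 0 := by
  ext x
  rw [← hc.sum_mul x, map_sum, LinearMap.zero_apply]
  exact Finset.sum_eq_zero fun i _ => hφ.apply_frame_mul_eq_zero hsimple hc hr i x

/-- A simple Euclidean Jordan algebra of rank `r ≥ 3` contains no lattice-like
hyperplane: there is no unit vector `a` such that the orthogonal projection
`x ↦ x - ⟨a,x⟩ a` onto the hyperplane through the origin with normal `a` maps
the cone of squares `Q` into itself. -/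
theorem no_latticeLike_hyperplane_of_rank_ge_three
    {V : Type*} [NormedAddCommGroup V] [InnerProductSpace ℝ V]
    [FiniteDimensional ℝ V] (J : EJA V) (hsimple : J.IsSimple)
    {r : ℕ} (c : Fin r → V) (hc : J.IsJordanFrame c) (hr : 3 ≤ r) :
    ∀ a : V, ‖a‖ = 1 →
      ¬ (∀ x ∈ J.coneOfSquares, x - ⟪a, x⟫ • a ∈ J.coneOfSquares) := by
  intro a hnorm ha
  have h_zero := no_latticeLike_hyperplane_of_rank_ge_three_general J hsimple c hc hr _
    (EJA.orthoIdemNonpos_innerₗ ha)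
  simp [inner_self_eq_zero.mp (DFunLike.congr_fun h_zero a)] at hnorm
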